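/- arXiv:1201.1393 — 2 statements merged into one kernel-verified Lean document; each statement's English description precedes it below -/
import Mathlib

section
/- Let T be a pretriangulated category admitting countable coproducts and let S be a triangulated subcategory of T that is closed under countable coproducts of its objects. Then S is thick, i.e. closed under direct summands: if a biproduct X ⊕ Y belongs to S, then X belongs to S. -/
open CategoryTheory Limits Pretriangulated

/-- A triangulated subcategory of a pretriangulated category which is closed under countable
coproducts is thick: if `X ⊞ Y` belongs to it, then so does `X`. -/
theorem thick_of_closed_under_countable_coproducts {T : Type u} [Category.{v} T]
    [HasZeroObject T] [HasShift T ℤ] [Preadditive T]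
    [∀ n : ℤ, (shiftFunctor T n).Additive] [Pretriangulated T]
    [HasBinaryBiproducts T]
    [∀ (I : Type) [Countable I], HasColimitsOfShape (Discrete I) T]
    (S : Set T)
    (hiso : ∀ X Y : T, (X ≅ Y) → X ∈ S → Y ∈ S)
    (hshift : ∀ X ∈ S, ∀ n : ℤ, X⟦n⟧ ∈ S)
    (htri : ∀ Tr ∈ distTriang T, Tr.obj₁ ∈ S → Tr.obj₂ ∈ S → Tr.obj₃ ∈ S)
    (hcoprod : ∀ (I : Type) [Countable I] (Y : I → T), (∀ i, Y i ∈ S) → (∐ Y) ∈ S)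
    (X Y : T) (hXY : (X ⊞ Y) ∈ S) : X ∈ S := by
  let A : T := ∐ (fun _ : ℕ => X ⊞ Y)
  have hA : A ∈ S := hcoprod ℕ (fun _ => X ⊞ Y) (fun _ => hXY)
  let j : ℕ → ((X ⊞ Y) ⟶ A) := fun n => Sigma.ι (fun _ : ℕ => X ⊞ Y) n
  let f : A ⟶ A := Sigma.desc (fun n =>
    biprod.fst ≫ biprod.inl ≫ j (n + 1) + biprod.snd ≫ biprod.inr ≫ j n)
  let g : A ⟶ A ⊞ X := Sigma.desc (fun n => Nat.casesOn n
    (biprod.fst ≫ biprod.inr + biprod.snd ≫ biprod.inr ≫ j 0 ≫ biprod.inl)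
    (fun m => biprod.fst ≫ biprod.inl ≫ j m ≫ biprod.inl +
      biprod.snd ≫ biprod.inr ≫ j (m + 1) ≫ biprod.inl))
  have hf : ∀ n, j n ≫ f =
      biprod.fst ≫ biprod.inl ≫ j (n + 1) + biprod.snd ≫ biprod.inr ≫ j n :=
    fun n => Sigma.ι_desc _ _
  have hg0 : j 0 ≫ g =
      biprod.fst ≫ biprod.inr + biprod.snd ≫ biprod.inr ≫ j 0 ≫ biprod.inl :=
    Sigma.ι_desc _ _
  have hg : ∀ m, j (m + 1) ≫ g = biprod.fst ≫ biprod.inl ≫ j m ≫ biprod.inl +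
      biprod.snd ≫ biprod.inr ≫ j (m + 1) ≫ biprod.inl :=
    fun m => Sigma.ι_desc _ _
  have hsplit : ∀ {Z : T} (u : (X ⊞ Y) ⟶ Z),
      biprod.fst ≫ biprod.inl ≫ u + biprod.snd ≫ biprod.inr ≫ u = u := by
    intro Z u
    ext <;> simp
  have hext : ∀ {Z : T} (u v : A ⟶ Z), (∀ n, j n ≫ u = j n ≫ v) → u = v :=
    fun u v h => Sigma.hom_ext _ _ h
  have e : A ⊞ X ≅ A :=
    { hom := biprod.desc f (biprod.inl ≫ j 0)
      inv := g
      hom_inv_id := by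
        apply biprod.hom_ext'
        · apply hext
          intro n
          rw [biprod.inl_desc_assoc, reassoc_of% (hf n), Preadditive.add_comp]
          simp only [Category.assoc, hg, Category.comp_id]
          cases n with
          | zero => rw [hg0]; ext <;> simp
          | succ m => rw [hg]; ext <;> simp
        · simp [hg0]
      inv_hom_id := by
        apply hext
        intro n
        cases n with
        | zero => rw [reassoc_of% hg0]; ext <;> simp [hf]
        | succ m => rw [reassoc_of% (hg m)]; ext <;> simp [hf] }
  exact htri _ (binaryBiproductTriangle_distinguished A X) hA (hiso _ _ e.symm hA)
end

section
/- Let C and D be pretriangulated categories, let F : D ⥤ C and G : C ⥤ D be additive functors with an adjunction F ⊣ G, and suppose G is exact (G commutes with the shift and sends distinguished triangles to distinguished triangles). Let (P, X, N, f : P → X, g : X → N, h : N → P⟦1⟧) be a distinguished triangle in C such that for every object W of D, every morphism F(W) → N in C is zero. Then G(f) : G(P) → G(X) is an isomorphism. -/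
open CategoryTheory Limits Pretriangulated

/-- Let `F ⊣ G` be an adjunction of additive functors between pretriangulated categories with
`G` exact. If `(P, X, N)` is a distinguished triangle in `C` such that every morphism
`F(W) ⟶ N` is zero, then `G(f) : G(P) ⟶ G(X)` is an isomorphism. -/
theorem isIso_map_mor₁_of_orthogonal {C D : Type*} [Category C] [Category D]
    [HasZeroObject C] [HasZeroObject D] [HasShift C ℤ] [HasShift D ℤ]
    [Preadditive C] [Preadditive D]
    [∀ n : ℤ, (shiftFunctor C n).Additive] [∀ n : ℤ, (shiftFunctor D n).Additive]
    [Pretriangulated C] [Pretriangulated D]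
    (F : D ⥤ C) (G : C ⥤ D) [F.Additive] [G.Additive]
    [G.CommShift ℤ] [G.IsTriangulated] (adj : F ⊣ G)
    (Tr : Triangle C) (hTr : Tr ∈ distTriang C)
    (h : ∀ (W : D) (f : F.obj W ⟶ Tr.obj₃), f = 0) :
    IsIso (G.map Tr.mor₁) := by
  have hz : IsZero (G.obj Tr.obj₃) := by
    rw [IsZero.iff_id_eq_zero]
    apply (adj.homEquiv _ _).symm.injective
    rw [h _ ((adj.homEquiv _ _).symm (𝟙 _)), h _ ((adj.homEquiv _ _).symm 0)]
  exact (Triangle.isZero₃_iff_isIso₁ _ (G.map_distinguished Tr hTr)).1 hz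
end
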